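/- Let T > 0, let μ be a real constant, let θ, σ₁, σ₂, η : [0,T] → ℝ be continuous with η(t) > 0 for all t, and let D, E, F, G, H, I, L, M, N, O, P, Q : [0,T) → ℝ be differentiable. Define C(x,β,t) = x²D(t) + β²E(t) + xβF(t) + xG(t) + βH(t) + I(t) and f(x,β,t) = x²L(t) + β²M(t) + xβN(t) + xO(t) + βP(t) + Q(t). If for all x, β ∈ ℝ and all t ∈ [0,T) the equations 0 = −θxβ − C_β·θβ + (1/2)C_ββ(σ₁²+σ₂²) + C_t − C_x²/(4η) + μσ₁²(x + f_β)² + μσ₂²f_β² and 0 = −θxβ + C_x²/(4η) − f_β·θβ + (1/2)f_ββ(σ₁²+σ₂²) − C_x·f_x/(2η) + f_t hold, then the coefficient functions satisfy, on [0,T): −D′ = −D²/η + μσ₁²(1+N)² + μσ₂²N²; −E′ = −2θE − F²/(4η) + 4μ(σ₁²+σ₂²)M²; −F′ = −θ − θF − DF/η + 4μσ₁²(1+N)M + 4μσ₂²MN; −G′ = −DG/η + 2μσ₁²(1+N)P + 2μσ₂²NP; −H′ = −θH − FG/(2η) + 4μ(σ₁²+σ₂²)MP; −I′ = (σ₁²+σ₂²)E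 − G²/(4η) + μ(σ₁²+σ₂²)P²; −L′ = D²/η − 2DL/η; −M′ = F²/(4η) − 2θM − FN/(2η); −N′ = −θ + DF/η − θN − (DN+FL)/η; −O′ = (DG − DO − GL)/η; −P′ = −θP + (FG − FO − GN)/(2η); −Q′ = G²/(4η) + (σ₁²+σ₂²)M − GO/(2η). -/

import Mathlib

/-- Quadratic ansatz `(x, β, t) ↦ x²D(t) + β²E(t) + xβF(t) + xG(t) + βH(t) + I(t)`. -/
noncomputable def quadAnsatz (D E F G H I : ℝ → ℝ) : ℝ → ℝ → ℝ → ℝ :=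
  fun x β t => x ^ 2 * D t + β ^ 2 * E t + x * β * F t + x * G t + β * H t + I t

/-- Partial derivative in the first (position) variable. -/
noncomputable def pdX (C : ℝ → ℝ → ℝ → ℝ) (x β t : ℝ) : ℝ := deriv (fun y => C y β t) x

/-- Partial derivative in the second variable. -/
noncomputable def pdB (C : ℝ → ℝ → ℝ → ℝ) (x β t : ℝ) : ℝ := deriv (fun b => C x b t) β

/-- Second partial derivative in the second variable. -/
noncomputable def pdBB (C : ℝ → ℝ → ℝ → ℝ) (x β t : ℝ) : ℝ := deriv (fun b => pdB C x b t) β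

/-- Partial derivative in the time variable. -/
noncomputable def pdT (C : ℝ → ℝ → ℝ → ℝ) (x β t : ℝ) : ℝ := deriv (fun s => C x β s) t

/-! Substituting the quadratic ansätze turns the right-hand side of each PDE, at a fixed time,
into a quadratic polynomial in `(x, β)`. Its six coefficients are the defects of six of the ODEs,
and a quadratic polynomial that vanishes identically has zero coefficients. -/

theorem coeffs_eq_zero_of_forall_quadratic_eq_zero {R : Type*} [CommRing R] [NoZeroDivisors R]
    [NeZero (2 : R)] {a b c d e k : R}
    (h : ∀ x y : R, x ^ 2 * a + y ^ 2 * b + x * y * c + x * d + y * e + k = 0) :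
    a = 0 ∧ b = 0 ∧ c = 0 ∧ d = 0 ∧ e = 0 ∧ k = 0 := by
  have eq_zero_of_two_mul {r : R} (hr : 2 * r = 0) : r = 0 :=
    (mul_eq_zero.mp hr).resolve_left two_ne_zero
  have hk : k = 0 := by linear_combination h 0 0
  have ha : a = 0 := eq_zero_of_two_mul (by linear_combination h 1 0 + h (-1) 0 - 2 * hk)
  have hb : b = 0 := eq_zero_of_two_mul (by linear_combination h 0 1 + h 0 (-1) - 2 * hk)
  have hd : d = 0 := by linear_combination h 1 0 - ha - hk
  have he : e = 0 := by linear_combination h 0 1 - hb - hk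
  have hc : c = 0 := by linear_combination h 1 1 - ha - hb - hd - he - hk
  exact ⟨ha, hb, hc, hd, he, hk⟩

section PartialDerivatives

variable (D E F G H I : ℝ → ℝ) (x β t : ℝ)

theorem pdX_quadAnsatz :
    pdX (quadAnsatz D E F G H I) x β t = 2 * x * D t + β * F t + G t := by
  have hx := hasDerivAt_id' x
  have h := (hx.pow 2).mul_const (D t) |>.add_const (β ^ 2 * E t)
    |>.add ((hx.mul_const β).mul_const (F t)) |>.add (hx.mul_const (G t))
    |>.add_const (β * H t) |>.add_const (I t)
  exact h.deriv.trans (by norm_num)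

theorem pdB_quadAnsatz :
    pdB (quadAnsatz D E F G H I) x β t = 2 * β * E t + x * F t + H t := by
  have hβ := hasDerivAt_id' β
  have h := (hβ.pow 2).mul_const (E t) |>.const_add (x ^ 2 * D t)
    |>.add ((hβ.const_mul x).mul_const (F t)) |>.add_const (x * G t)
    |>.add (hβ.mul_const (H t)) |>.add_const (I t)
  exact h.deriv.trans (by norm_num)

theorem pdBB_quadAnsatz : pdBB (quadAnsatz D E F G H I) x β t = 2 * E t := by
  simp only [pdBB, pdB_quadAnsatz]
  have h := ((hasDerivAt_id' β).const_mul 2).mul_const (E t)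
    |>.add_const (x * F t) |>.add_const (H t)
  exact h.deriv.trans (by norm_num)

variable {D E F G H I t} {D' E' F' G' H' I' : ℝ}

theorem pdT_quadAnsatz (hD : HasDerivAt D D' t) (hE : HasDerivAt E E' t)
    (hF : HasDerivAt F F' t) (hG : HasDerivAt G G' t) (hH : HasDerivAt H H' t)
    (hI : HasDerivAt I I' t) :
    pdT (quadAnsatz D E F G H I) x β t =
      x ^ 2 * D' + β ^ 2 * E' + x * β * F' + x * G' + β * H' + I' :=
  HasDerivAt.deriv <| (hD.const_mul (x ^ 2)).add (hE.const_mul (β ^ 2))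
    |>.add (hF.const_mul (x * β)) |>.add (hG.const_mul x) |>.add (hH.const_mul β) |>.add hI

end PartialDerivatives

section Residuals

/-- Right-hand side of the HJB equation for the value function `C`, coupled to the conditional
expectation `f` of the remaining cost. The numbers `θ`, `σ₁`, `σ₂`, `η` are the values of the model
coefficients at the time `t`. -/
noncomputable def valueResidual (μ θ σ₁ σ₂ η : ℝ) (C f : ℝ → ℝ → ℝ → ℝ) (x β t : ℝ) : ℝ :=
  -θ * x * β - pdB C x β t * θ * β + (1 / 2) * pdBB C x β t * (σ₁ ^ 2 + σ₂ ^ 2) + pdT C x β t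
    - pdX C x β t ^ 2 / (4 * η) + μ * σ₁ ^ 2 * (x + pdB f x β t) ^ 2
    + μ * σ₂ ^ 2 * pdB f x β t ^ 2

/-- Right-hand side of the equation for the conditional expectation `f` of the remaining cost when
trading at the rate induced by the value function `C`. The numbers `θ`, `σ₁`, `σ₂`, `η` are the
values of the model coefficients at the time `t`. -/
noncomputable def costResidual (θ σ₁ σ₂ η : ℝ) (C f : ℝ → ℝ → ℝ → ℝ) (x β t : ℝ) : ℝ :=
  -θ * x * β + pdX C x β t ^ 2 / (4 * η) - pdB f x β t * θ * β
    + (1 / 2) * pdBB f x β t * (σ₁ ^ 2 + σ₂ ^ 2) - pdX C x β t * pdX f x β t / (2 * η)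
    + pdT f x β t

variable {D E F G H I L M N O P Q : ℝ → ℝ} {t : ℝ}

theorem valueResidual_quadAnsatz (μ θ σ₁ σ₂ η : ℝ) {D' E' F' G' H' I' : ℝ}
    (hD : HasDerivAt D D' t) (hE : HasDerivAt E E' t) (hF : HasDerivAt F F' t)
    (hG : HasDerivAt G G' t) (hH : HasDerivAt H H' t) (hI : HasDerivAt I I' t) (x β : ℝ) :
    valueResidual μ θ σ₁ σ₂ η (quadAnsatz D E F G H I) (quadAnsatz L M N O P Q) x β t =
      x ^ 2 * (D' - D t ^ 2 / η + μ * σ₁ ^ 2 * (1 + N t) ^ 2 + μ * σ₂ ^ 2 * N t ^ 2)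
      + β ^ 2 * (E' - 2 * θ * E t - F t ^ 2 / (4 * η)
          + 4 * μ * (σ₁ ^ 2 + σ₂ ^ 2) * M t ^ 2)
      + x * β * (F' - θ - θ * F t - D t * F t / η
          + 4 * μ * σ₁ ^ 2 * (1 + N t) * M t + 4 * μ * σ₂ ^ 2 * M t * N t)
      + x * (G' - D t * G t / η + 2 * μ * σ₁ ^ 2 * (1 + N t) * P t
          + 2 * μ * σ₂ ^ 2 * N t * P t)
      + β * (H' - θ * H t - F t * G t / (2 * η) + 4 * μ * (σ₁ ^ 2 + σ₂ ^ 2) * M t * P t)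
      + (I' + (σ₁ ^ 2 + σ₂ ^ 2) * E t - G t ^ 2 / (4 * η)
          + μ * (σ₁ ^ 2 + σ₂ ^ 2) * P t ^ 2) := by
  rw [valueResidual, pdX_quadAnsatz, pdB_quadAnsatz, pdB_quadAnsatz, pdBB_quadAnsatz,
    pdT_quadAnsatz x β hD hE hF hG hH hI]
  ring

theorem costResidual_quadAnsatz (θ σ₁ σ₂ η : ℝ) {L' M' N' O' P' Q' : ℝ}
    (hL : HasDerivAt L L' t) (hM : HasDerivAt M M' t) (hN : HasDerivAt N N' t)
    (hO : HasDerivAt O O' t) (hP : HasDerivAt P P' t) (hQ : HasDerivAt Q Q' t) (x β : ℝ) :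
    costResidual θ σ₁ σ₂ η (quadAnsatz D E F G H I) (quadAnsatz L M N O P Q) x β t =
      x ^ 2 * (L' + D t ^ 2 / η - 2 * D t * L t / η)
      + β ^ 2 * (M' + F t ^ 2 / (4 * η) - 2 * θ * M t - F t * N t / (2 * η))
      + x * β * (N' - θ + D t * F t / η - θ * N t - (D t * N t + F t * L t) / η)
      + x * (O' + (D t * G t - D t * O t - G t * L t) / η)
      + β * (P' - θ * P t + (F t * G t - F t * O t - G t * N t) / (2 * η))
      + (Q' + G t ^ 2 / (4 * η) + (σ₁ ^ 2 + σ₂ ^ 2) * M t - G t * O t / (2 * η)) := by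
  rw [costResidual, pdX_quadAnsatz, pdX_quadAnsatz, pdB_quadAnsatz, pdBB_quadAnsatz,
    pdT_quadAnsatz x β hL hM hN hO hP hQ]
  ring

end Residuals

theorem signal_HJB_implies_ODE_system_general {μ θ σ₁ σ₂ η t : ℝ} (_hη : η ≠ 0)
    {D E F G H I L M N O P Q : ℝ → ℝ} {D' E' F' G' H' I' L' M' N' O' P' Q' : ℝ}
    (hD : HasDerivAt D D' t) (hE : HasDerivAt E E' t) (hF : HasDerivAt F F' t)
    (hG : HasDerivAt G G' t) (hH : HasDerivAt H H' t) (hI : HasDerivAt I I' t)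
    (hL : HasDerivAt L L' t) (hM : HasDerivAt M M' t) (hN : HasDerivAt N N' t)
    (hO : HasDerivAt O O' t) (hP : HasDerivAt P P' t) (hQ : HasDerivAt Q Q' t)
    (hvalue : ∀ x β,
      valueResidual μ θ σ₁ σ₂ η (quadAnsatz D E F G H I) (quadAnsatz L M N O P Q) x β t = 0)
    (hcost : ∀ x β,
      costResidual θ σ₁ σ₂ η (quadAnsatz D E F G H I) (quadAnsatz L M N O P Q) x β t = 0) :
    (-D' = -D t ^ 2 / η + μ * σ₁ ^ 2 * (1 + N t) ^ 2 + μ * σ₂ ^ 2 * N t ^ 2) ∧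
    (-E' = -2 * θ * E t - F t ^ 2 / (4 * η) + 4 * μ * (σ₁ ^ 2 + σ₂ ^ 2) * M t ^ 2) ∧
    (-F' = -θ - θ * F t - D t * F t / η
        + 4 * μ * σ₁ ^ 2 * (1 + N t) * M t + 4 * μ * σ₂ ^ 2 * M t * N t) ∧
    (-G' = -D t * G t / η + 2 * μ * σ₁ ^ 2 * (1 + N t) * P t + 2 * μ * σ₂ ^ 2 * N t * P t) ∧
    (-H' = -θ * H t - F t * G t / (2 * η) + 4 * μ * (σ₁ ^ 2 + σ₂ ^ 2) * M t * P t) ∧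
    (-I' = (σ₁ ^ 2 + σ₂ ^ 2) * E t - G t ^ 2 / (4 * η) + μ * (σ₁ ^ 2 + σ₂ ^ 2) * P t ^ 2) ∧
    (-L' = D t ^ 2 / η - 2 * D t * L t / η) ∧
    (-M' = F t ^ 2 / (4 * η) - 2 * θ * M t - F t * N t / (2 * η)) ∧
    (-N' = -θ + D t * F t / η - θ * N t - (D t * N t + F t * L t) / η) ∧
    (-O' = (D t * G t - D t * O t - G t * L t) / η) ∧
    (-P' = -θ * P t + (F t * G t - F t * O t - G t * N t) / (2 * η)) ∧
    (-Q' = G t ^ 2 / (4 * η) + (σ₁ ^ 2 + σ₂ ^ 2) * M t - G t * O t / (2 * η)) := by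
  simp only [valueResidual_quadAnsatz μ θ σ₁ σ₂ η hD hE hF hG hH hI] at hvalue
  simp only [costResidual_quadAnsatz θ σ₁ σ₂ η hL hM hN hO hP hQ] at hcost
  obtain ⟨odeD, odeE, odeF, odeG, odeH, odeI⟩ := coeffs_eq_zero_of_forall_quadratic_eq_zero hvalue
  obtain ⟨odeL, odeM, odeN, odeO, odeP, odeQ⟩ := coeffs_eq_zero_of_forall_quadratic_eq_zero hcost
  refine ⟨?_, ?_, ?_, ?_, ?_, ?_, ?_, ?_, ?_, ?_, ?_, ?_⟩
  · linear_combination -odeD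
  · linear_combination -odeE
  · linear_combination -odeF
  · linear_combination -odeG
  · linear_combination -odeH
  · linear_combination -odeI
  · linear_combination -odeL
  · linear_combination -odeM
  · linear_combination -odeN
  · linear_combination -odeO
  · linear_combination -odeP
  · linear_combination -odeQ

/-- coefficient-matching converse: In the random-pricing-signal
model, if the quadratic ansätze `C` and `f` solve the two coupled HJB-type
PDEs for all `x, β ∈ ℝ` and `t ∈ [0,T)`, then the coefficient functions
`D, …, Q` solve the displayed ODE system on `[0,T)`. -/
theorem signal_HJB_implies_ODE_system
    (T μ : ℝ) (hT : 0 < T)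
    (θ σ₁ σ₂ η : ℝ → ℝ)
    (hθ : ContinuousOn θ (Set.Icc 0 T)) (hσ₁ : ContinuousOn σ₁ (Set.Icc 0 T))
    (hσ₂ : ContinuousOn σ₂ (Set.Icc 0 T)) (hη : ContinuousOn η (Set.Icc 0 T))
    (hηpos : ∀ t ∈ Set.Icc (0 : ℝ) T, 0 < η t)
    (D E F G H I L M N O P Q D' E' F' G' H' I' L' M' N' O' P' Q' : ℝ → ℝ)
    (hD : ∀ t ∈ Set.Ico (0 : ℝ) T, HasDerivAt D (D' t) t)
    (hE : ∀ t ∈ Set.Ico (0 : ℝ) T, HasDerivAt E (E' t) t)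
    (hF : ∀ t ∈ Set.Ico (0 : ℝ) T, HasDerivAt F (F' t) t)
    (hG : ∀ t ∈ Set.Ico (0 : ℝ) T, HasDerivAt G (G' t) t)
    (hH : ∀ t ∈ Set.Ico (0 : ℝ) T, HasDerivAt H (H' t) t)
    (hI : ∀ t ∈ Set.Ico (0 : ℝ) T, HasDerivAt I (I' t) t)
    (hL : ∀ t ∈ Set.Ico (0 : ℝ) T, HasDerivAt L (L' t) t)
    (hM : ∀ t ∈ Set.Ico (0 : ℝ) T, HasDerivAt M (M' t) t)
    (hN : ∀ t ∈ Set.Ico (0 : ℝ) T, HasDerivAt N (N' t) t)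
    (hO : ∀ t ∈ Set.Ico (0 : ℝ) T, HasDerivAt O (O' t) t)
    (hP : ∀ t ∈ Set.Ico (0 : ℝ) T, HasDerivAt P (P' t) t)
    (hQ : ∀ t ∈ Set.Ico (0 : ℝ) T, HasDerivAt Q (Q' t) t)
    (hpde : ∀ (x β : ℝ), ∀ t ∈ Set.Ico (0 : ℝ) T,
      (0 = -θ t * x * β
          - pdB (quadAnsatz D E F G H I) x β t * θ t * β
          + (1 / 2) * pdBB (quadAnsatz D E F G H I) x β t * ((σ₁ t) ^ 2 + (σ₂ t) ^ 2)
          + pdT (quadAnsatz D E F G H I) x β t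
          - (pdX (quadAnsatz D E F G H I) x β t) ^ 2 / (4 * η t)
          + μ * (σ₁ t) ^ 2 * (x + pdB (quadAnsatz L M N O P Q) x β t) ^ 2
          + μ * (σ₂ t) ^ 2 * (pdB (quadAnsatz L M N O P Q) x β t) ^ 2) ∧
      (0 = -θ t * x * β
          + (pdX (quadAnsatz D E F G H I) x β t) ^ 2 / (4 * η t)
          - pdB (quadAnsatz L M N O P Q) x β t * θ t * β
          + (1 / 2) * pdBB (quadAnsatz L M N O P Q) x β t * ((σ₁ t) ^ 2 + (σ₂ t) ^ 2)
          - pdX (quadAnsatz D E F G H I) x β t * pdX (quadAnsatz L M N O P Q) x β t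
              / (2 * η t)
          + pdT (quadAnsatz L M N O P Q) x β t)) :
    ∀ t ∈ Set.Ico (0 : ℝ) T,
      (-D' t = -(D t) ^ 2 / η t + μ * (σ₁ t) ^ 2 * (1 + N t) ^ 2
          + μ * (σ₂ t) ^ 2 * (N t) ^ 2) ∧
      (-E' t = -2 * θ t * E t - (F t) ^ 2 / (4 * η t)
          + 4 * μ * ((σ₁ t) ^ 2 + (σ₂ t) ^ 2) * (M t) ^ 2) ∧
      (-F' t = -θ t - θ t * F t - D t * F t / η t
          + 4 * μ * (σ₁ t) ^ 2 * (1 + N t) * M t + 4 * μ * (σ₂ t) ^ 2 * M t * N t) ∧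
      (-G' t = -D t * G t / η t + 2 * μ * (σ₁ t) ^ 2 * (1 + N t) * P t
          + 2 * μ * (σ₂ t) ^ 2 * N t * P t) ∧
      (-H' t = -θ t * H t - F t * G t / (2 * η t)
          + 4 * μ * ((σ₁ t) ^ 2 + (σ₂ t) ^ 2) * M t * P t) ∧
      (-I' t = ((σ₁ t) ^ 2 + (σ₂ t) ^ 2) * E t - (G t) ^ 2 / (4 * η t)
          + μ * ((σ₁ t) ^ 2 + (σ₂ t) ^ 2) * (P t) ^ 2) ∧
      (-L' t = (D t) ^ 2 / η t - 2 * D t * L t / η t) ∧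
      (-M' t = (F t) ^ 2 / (4 * η t) - 2 * θ t * M t - F t * N t / (2 * η t)) ∧
      (-N' t = -θ t + D t * F t / η t - θ t * N t
          - (D t * N t + F t * L t) / η t) ∧
      (-O' t = (D t * G t - D t * O t - G t * L t) / η t) ∧
      (-P' t = -θ t * P t + (F t * G t - F t * O t - G t * N t) / (2 * η t)) ∧
      (-Q' t = (G t) ^ 2 / (4 * η t) + ((σ₁ t) ^ 2 + (σ₂ t) ^ 2) * M t
          - G t * O t / (2 * η t)) :=
  fun t ht ↦ signal_HJB_implies_ODE_system_general (hηpos t (Set.Ico_subset_Icc_self ht)).ne'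
    (hD t ht) (hE t ht) (hF t ht) (hG t ht) (hH t ht) (hI t ht)
    (hL t ht) (hM t ht) (hN t ht) (hO t ht) (hP t ht) (hQ t ht)
    (fun x β ↦ (hpde x β t ht).1.symm) (fun x β ↦ (hpde x β t ht).2.symm)
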